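/- Let n ≥ 3 and let k be an integer with 2 ≤ k ≤ n. Among all minimally generalized (k, n−2)-arc-strongly connected digraphs of order n, those with the minimum number of arcs are exactly the members of D_{n,1} (each having n(n−2) arcs), and those with the maximum number of arcs are exactly the members of D_{n,2} (each having (n−1)² arcs). -/

import Mathlib

/-!
Write `K - σ` for the digraph with an arc `u → v` whenever `u ≠ v` and `v ≠ σ u`, where `σ` is a
permutation of the vertices, possibly with fixed points. The proof rests on the equivalence of

* `n - 2 ≤ λ_k(D)`;
* each vertex has at most one out-non-neighbour and at most one in-non-neighbour;
* `D` contains `K - σ` for some permutation `σ`.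

Degrees are forced because arc-disjoint `(S,r)`-trees use different arcs out of `r` and different
arcs into any other vertex of `S` (`adj_or_adj_of_le_lambdaK`). The non-arcs then form a partial
injection, which extends to a permutation (`exists_perm_of_adj_or_adj`). Conversely, `n - 2`
arc-disjoint spanning out-trees of `K - σ` rooted at `r` are written down explicitly
(`isSRTree_tree`, `arcDisj_tree`), so no form of Edmonds' branching theorem is needed.

Hence the minimal digraphs are the `K - σ` with `σ` having at most one fixed point
(`minASC_iff`): if `σ` fixes two vertices `a ≠ b`, then the arc `a → b` is superfluous, as one sees
by composing `σ` with the transposition of `a` and `b`. With no fixed point the digraph lies in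
`D_{n,1}` and has `n(n-2)` arcs; with exactly one it lies in `D_{n,2}` and has `(n-1)²` arcs. Both
families are nonempty, since there are cycles of length `n` and `n - 1`.
-/

/-!
Formalization of directed tree connectivity (Sun, "Extremal results for
directed tree connectivity").

A digraph (no loops, no parallel arcs) on a vertex type `V` is given by an
irreflexive adjacency relation.  Out-trees, `(S,r)`-trees, the parameters
`κ_k`, `λ_k`, minimally generalized `(k,ℓ)`-vertex/arc-strongly connected
digraphs, the families `D_{n,1}`, `D_{n,2}` and the extremal functions
`f, g, F, G` are defined below.
-/

namespace TreeConn

/-- A digraph without loops or parallel arcs. -/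
structure Dgr (V : Type) where
  Adj : V → V → Prop
  loopless : ∀ v, ¬ Adj v v

variable {V : Type}

/-- The arc set of a digraph, as a set of ordered pairs. -/
def Dgr.Arcs (D : Dgr V) : Set (V × V) := {p | D.Adj p.1 p.2}

/-- Delete a single arc. -/
def Dgr.deleteArc (D : Dgr V) (e : V × V) : Dgr V :=
  ⟨fun u v => D.Adj u v ∧ (u, v) ≠ e, fun v h => D.loopless v h.1⟩

/-- Delete a set of arcs. -/
def Dgr.deleteArcs (D : Dgr V) (M : Set (V × V)) : Dgr V :=
  ⟨fun u v => D.Adj u v ∧ (u, v) ∉ M, fun v h => D.loopless v h.1⟩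

/-- Vertices incident to some arc of the arc set `T`. -/
def averts (T : Set (V × V)) : Set V := {v | ∃ u, (u, v) ∈ T ∨ (v, u) ∈ T}

/-- Vertex set of the tree with arc set `T` and root `r`. -/
def tverts (T : Set (V × V)) (r : V) : Set V := averts T ∪ {r}

/-- The arc set `T` forms an out-tree rooted at `r`: every vertex incident
to `T` is reachable from `r` inside `T`, the root has in-degree `0`, and
every other vertex has in-degree exactly one. -/
def IsOutTree (T : Set (V × V)) (r : V) : Prop :=
  (∀ v ∈ averts T, Relation.ReflTransGen (fun a b => (a, b) ∈ T) r v) ∧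
  (∀ p ∈ T, p.2 ≠ r) ∧
  (∀ v ∈ averts T, v ≠ r → ∃! u, (u, v) ∈ T)

/-- `T` is an `(S, r)`-tree of `D`: an out-tree of `D` rooted at `r`
containing all vertices of `S`. -/
def IsSRTree (D : Dgr V) (S : Set V) (r : V) (T : Set (V × V)) : Prop :=
  T ⊆ D.Arcs ∧ IsOutTree T r ∧ S ⊆ tverts T r

/-- `T` is an out-branching (spanning out-tree) of `D` rooted at `r`. -/
def IsOutBranching (D : Dgr V) (r : V) (T : Set (V × V)) : Prop :=
  T ⊆ D.Arcs ∧ IsOutTree T r ∧ tverts T r = Set.univ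

/-- Two trees (arc sets) are arc-disjoint. -/
def ArcDisj (T₁ T₂ : Set (V × V)) : Prop := T₁ ∩ T₂ = ∅

/-- Two arc-disjoint `(S,r)`-trees are internally disjoint:
`V(T₁) ∩ V(T₂) = S`. -/
def IntDisj (S : Set V) (r : V) (T₁ T₂ : Set (V × V)) : Prop :=
  ArcDisj T₁ T₂ ∧ tverts T₁ r ∩ tverts T₂ r = S

/-- `κ_{S,r}(D)`: maximum number of pairwise internally disjoint
`(S,r)`-trees in `D`. -/
noncomputable def kappaSr (D : Dgr V) (S : Set V) (r : V) : ℕ :=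
  sSup {m | ∃ f : Fin m → Set (V × V), (∀ i, IsSRTree D S r (f i)) ∧
    ∀ i j, i ≠ j → IntDisj S r (f i) (f j)}

/-- `λ_{S,r}(D)`: maximum number of pairwise arc-disjoint
`(S,r)`-trees in `D`. -/
noncomputable def lambdaSr (D : Dgr V) (S : Set V) (r : V) : ℕ :=
  sSup {m | ∃ f : Fin m → Set (V × V), (∀ i, IsSRTree D S r (f i)) ∧
    ∀ i j, i ≠ j → ArcDisj (f i) (f j)}

/-- The generalized `k`-vertex-strong connectivity `κ_k(D)`. -/
noncomputable def kappaK (D : Dgr V) (k : ℕ) : ℕ :=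
  sInf {m | ∃ S : Set V, ∃ r ∈ S, S.ncard = k ∧ m = kappaSr D S r}

/-- The generalized `k`-arc-strong connectivity `λ_k(D)`. -/
noncomputable def lambdaK (D : Dgr V) (k : ℕ) : ℕ :=
  sInf {m | ∃ S : Set V, ∃ r ∈ S, S.ncard = k ∧ m = lambdaSr D S r}

/-- A digraph is strong if every vertex can reach every other vertex. -/
def Strong (D : Dgr V) : Prop := ∀ u v, Relation.ReflTransGen D.Adj u v

/-- A digraph is minimally strong if it is strong but deleting any arc
destroys strongness. -/
def MinimallyStrong (D : Dgr V) : Prop :=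
  Strong D ∧ ∀ e ∈ D.Arcs, ¬ Strong (D.deleteArc e)

/-- `D` is minimally generalized `(k, ℓ)`-vertex-strongly connected. -/
def MinVSC (D : Dgr V) (k ℓ : ℕ) : Prop :=
  ℓ ≤ kappaK D k ∧ ∀ e ∈ D.Arcs, kappaK (D.deleteArc e) k ≤ ℓ - 1

/-- `D` is minimally generalized `(k, ℓ)`-arc-strongly connected. -/
def MinASC (D : Dgr V) (k ℓ : ℕ) : Prop :=
  ℓ ≤ lambdaK D k ∧ ∀ e ∈ D.Arcs, lambdaK (D.deleteArc e) k ≤ ℓ - 1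

/-- The complete digraph `↔K_n` on `Fin n`. -/
def completeD (n : ℕ) : Dgr (Fin n) := ⟨fun u v => u ≠ v, fun _ h => h rfl⟩

/-- The arc set `M` induces a vertex-disjoint union of directed cycles
(2-cycles allowed) whose vertex set is exactly `W`: all arcs of `M` are
non-loops inside `W`, and every vertex of `W` has exactly one out-arc and
exactly one in-arc in `M`. -/
def CycleFactorOn (M : Set (V × V)) (W : Set V) : Prop :=
  (∀ p ∈ M, p.1 ∈ W ∧ p.2 ∈ W ∧ p.1 ≠ p.2) ∧
  (∀ v ∈ W, ∃! u, (v, u) ∈ M) ∧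
  (∀ v ∈ W, ∃! u, (u, v) ∈ M)

/-- The family `D_{n,1}`: digraphs obtained from `↔K_n` by deleting an arc
set `M` inducing a vertex-disjoint union of cycles covering all `n`
vertices. -/
def D1 (n : ℕ) : Set (Dgr (Fin n)) :=
  {D | ∃ M : Set (Fin n × Fin n), CycleFactorOn M Set.univ ∧
    D = (completeD n).deleteArcs M}

/-- The family `D_{n,2}`: digraphs obtained from `↔K_n` by deleting an arc
set `M` inducing a vertex-disjoint union of cycles covering exactly `n - 1`
vertices. -/
def D2 (n : ℕ) : Set (Dgr (Fin n)) :=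
  {D | ∃ M : Set (Fin n × Fin n), ∃ w : Fin n, CycleFactorOn M ({w}ᶜ) ∧
    D = (completeD n).deleteArcs M}

/-- `f(n,k,ℓ)`: minimum number of arcs of a minimally generalized
`(k,ℓ)`-vertex-strongly connected digraph of order `n`. -/
noncomputable def fMin (n k ℓ : ℕ) : ℕ :=
  sInf {m | ∃ D : Dgr (Fin n), MinVSC D k ℓ ∧ D.Arcs.ncard = m}

/-- `g(n,k,ℓ)`: minimum number of arcs of a minimally generalized
`(k,ℓ)`-arc-strongly connected digraph of order `n`. -/
noncomputable def gMin (n k ℓ : ℕ) : ℕ :=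
  sInf {m | ∃ D : Dgr (Fin n), MinASC D k ℓ ∧ D.Arcs.ncard = m}

/-- `F(n,k,ℓ)`: maximum number of arcs of a minimally generalized
`(k,ℓ)`-vertex-strongly connected digraph of order `n`. -/
noncomputable def FMax (n k ℓ : ℕ) : ℕ :=
  sSup {m | ∃ D : Dgr (Fin n), MinVSC D k ℓ ∧ D.Arcs.ncard = m}

/-- `G(n,k,ℓ)`: maximum number of arcs of a minimally generalized
`(k,ℓ)`-arc-strongly connected digraph of order `n`. -/
noncomputable def GMax (n k ℓ : ℕ) : ℕ :=
  sSup {m | ∃ D : Dgr (Fin n), MinASC D k ℓ ∧ D.Arcs.ncard = m}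

/-! ### Degrees forced by arc-disjoint trees -/

lemma IsSRTree.exists_arc_out {D : Dgr V} {S : Set V} {r s : V} {T : Set (V × V)}
    (h : IsSRTree D S r T) (hs : s ∈ S) (hsr : s ≠ r) : ∃ c, (r, c) ∈ T := by
  obtain ⟨-, ⟨h1, -, -⟩, h4⟩ := h
  have hav : s ∈ averts T := (h4 hs).resolve_right hsr
  rcases (h1 s hav).cases_head with h | ⟨c, hc, -⟩
  · exact absurd h.symm hsr
  · exact ⟨c, hc⟩

lemma IsSRTree.exists_arc_in {D : Dgr V} {S : Set V} {r s : V} {T : Set (V × V)}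
    (h : IsSRTree D S r T) (hs : s ∈ S) (hsr : s ≠ r) : ∃ c, (c, s) ∈ T := by
  obtain ⟨-, ⟨-, -, h3⟩, h4⟩ := h
  exact (h3 s ((h4 hs).resolve_right hsr) hsr).exists

/-- Arc-disjoint trees pick distinct heads among the arcs leaving the root. -/
lemma exists_injective_out {D : Dgr V} {S : Set V} {r s : V} {m : ℕ} {f : Fin m → Set (V × V)}
    (hf : ∀ i, IsSRTree D S r (f i)) (hd : ∀ i j, i ≠ j → ArcDisj (f i) (f j))
    (hs : s ∈ S) (hsr : s ≠ r) :
    ∃ g : Fin m → V, Function.Injective g ∧ ∀ i, D.Adj r (g i) := by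
  choose g hg using fun i => (hf i).exists_arc_out hs hsr
  refine ⟨g, fun i j hij => ?_, fun i => (hf i).1 (hg i)⟩
  by_contra hne
  have : (r, g i) ∈ f i ∩ f j := ⟨hg i, hij ▸ hg j⟩
  rw [hd i j hne] at this
  exact this

/-- Arc-disjoint trees pick distinct tails among the arcs entering a terminal. -/
lemma exists_injective_in {D : Dgr V} {S : Set V} {r s : V} {m : ℕ} {f : Fin m → Set (V × V)}
    (hf : ∀ i, IsSRTree D S r (f i)) (hd : ∀ i j, i ≠ j → ArcDisj (f i) (f j))
    (hs : s ∈ S) (hsr : s ≠ r) :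
    ∃ g : Fin m → V, Function.Injective g ∧ ∀ i, D.Adj (g i) s := by
  choose g hg using fun i => (hf i).exists_arc_in hs hsr
  refine ⟨g, fun i j hij => ?_, fun i => (hf i).1 (hg i)⟩
  by_contra hne
  have : (g i, s) ∈ f i ∩ f j := ⟨hg i, hij ▸ hg j⟩
  rw [hd i j hne] at this
  exact this

/-- If `m > 0`, the bound `m ≤ λ_{S,r}(D)` provides `m` arc-disjoint trees; positivity excludes
the junk value `0` of an unbounded supremum. -/
lemma exists_trees_of_le_lambdaSr {D : Dgr V} {S : Set V} {r : V} {m : ℕ} (hm : 0 < m)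
    (h : m ≤ lambdaSr D S r) :
    ∃ f : Fin m → Set (V × V), (∀ i, IsSRTree D S r (f i)) ∧
      ∀ i j, i ≠ j → ArcDisj (f i) (f j) := by
  unfold lambdaSr at h
  set A := {m | ∃ f : Fin m → Set (V × V), (∀ i, IsSRTree D S r (f i)) ∧
    ∀ i j, i ≠ j → ArcDisj (f i) (f j)} with hA
  have hne : A.Nonempty := by
    rw [Set.nonempty_iff_ne_empty]
    intro h0
    rw [h0] at h
    simp at h
    omega
  have hb : BddAbove A := by
    by_contra hb
    rw [Nat.sSup_of_not_bddAbove hb] at h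
    omega
  obtain ⟨f, hf, hd⟩ := Nat.sSup_mem hne hb
  refine ⟨fun i => f (Fin.castLE h i), fun i => hf _, fun i j hij => hd _ _ ?_⟩
  simpa [Fin.ext_iff] using hij

lemma le_lambdaSr {n m : ℕ} {D : Dgr (Fin n)} {S : Set (Fin n)} {r s : Fin n}
    (hs : s ∈ S) (hsr : s ≠ r) {f : Fin m → Set (Fin n × Fin n)}
    (hf : ∀ i, IsSRTree D S r (f i)) (hd : ∀ i j, i ≠ j → ArcDisj (f i) (f j)) :
    m ≤ lambdaSr D S r := by
  refine le_csSup ⟨n, ?_⟩ ⟨f, hf, hd⟩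
  rintro j ⟨f', hf', hd'⟩
  obtain ⟨g, hg, -⟩ := exists_injective_out hf' hd' hs hsr
  simpa using Fintype.card_le_of_injective g hg

lemma exists_set_ncard {n k : ℕ} (hk : 2 ≤ k) (hkn : k ≤ n) {x y : Fin n} (hxy : x ≠ y) :
    ∃ S : Set (Fin n), x ∈ S ∧ y ∈ S ∧ S.ncard = k := by
  obtain ⟨u, hu, hc⟩ := Finset.exists_superset_card_eq (s := {x, y}) (n := k)
    (by rwa [Finset.card_pair hxy]) (by simpa using hkn)
  refine ⟨u, ?_, ?_, by simpa using hc⟩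
  · exact hu (by simp)
  · exact hu (by simp)

/-- An injection from `n - 2` indices into `Fin n` misses only two values. -/
lemma not_three_missed {n : ℕ} {g : Fin (n - 2) → Fin n} (hg : Function.Injective g)
    {r a b : Fin n} (hra : r ≠ a) (hrb : r ≠ b) (hab : a ≠ b)
    (h : ∀ i, g i ≠ r ∧ g i ≠ a ∧ g i ≠ b) : False := by
  have h1 : Finset.univ.image g ⊆ ({r, a, b} : Finset (Fin n))ᶜ := by
    intro x hx
    obtain ⟨i, -, rfl⟩ := Finset.mem_image.1 hx
    simpa using h i
  have h2 := Finset.card_le_card h1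
  have h3 : ({r, a, b} : Finset (Fin n)).card = 3 := Finset.card_eq_three.2
    ⟨r, a, b, hra, hrb, hab, rfl⟩
  have h4 := Finset.card_le_univ ({r, a, b} : Finset (Fin n))
  rw [Finset.card_image_of_injective _ hg, Finset.card_compl, h3] at h2
  simp [h3] at h2 h4
  omega

/-- `λ_k(D) ≥ n - 2` forces all out-degrees and in-degrees to be at least `n - 2`: among two
vertices different from `r`, at least one is an out-neighbour and at least one an in-neighbour. -/
lemma adj_or_adj_of_le_lambdaK {n k : ℕ} (hn : 3 ≤ n) (hk : 2 ≤ k) (hkn : k ≤ n)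
    {D : Dgr (Fin n)} (h : n - 2 ≤ lambdaK D k) {r a b : Fin n} (hra : r ≠ a) (hrb : r ≠ b)
    (hab : a ≠ b) : (D.Adj r a ∨ D.Adj r b) ∧ (D.Adj a r ∨ D.Adj b r) := by
  obtain ⟨S, hr, ha, hS⟩ := exists_set_ncard hk hkn hra
  have key : ∀ x ∈ S, ∃ f : Fin (n - 2) → Set (Fin n × Fin n), (∀ i, IsSRTree D S x (f i)) ∧
      ∀ i j, i ≠ j → ArcDisj (f i) (f j) := fun x hx =>
    exists_trees_of_le_lambdaSr (by omega) (h.trans (Nat.sInf_le ⟨S, x, hx, hS, rfl⟩))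
  constructor
  · by_contra! hno
    obtain ⟨f, hf, hd⟩ := key r hr
    obtain ⟨g, hg, hadj⟩ := exists_injective_out hf hd ha hra.symm
    refine not_three_missed hg hra hrb hab fun i => ⟨?_, ?_, ?_⟩ <;> intro he
    · exact D.loopless r (he ▸ hadj i)
    · exact hno.1 (he ▸ hadj i)
    · exact hno.2 (he ▸ hadj i)
  · by_contra! hno
    obtain ⟨f, hf, hd⟩ := key a ha
    obtain ⟨g, hg, hadj⟩ := exists_injective_in hf hd hr hra
    refine not_three_missed hg hra hrb hab fun i => ⟨?_, ?_, ?_⟩ <;> intro he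
    · exact D.loopless r (he ▸ hadj i)
    · exact hno.1 (he ▸ hadj i)
    · exact hno.2 (he ▸ hadj i)

/-! ### Complete digraphs minus a permutation -/

/-- The digraph `K - σ`: the complete digraph without the arcs `u → σ u`. Fixed points of `σ`
impose no condition, as the loops are absent anyway. -/
def compl {n : ℕ} (σ : Equiv.Perm (Fin n)) : Dgr (Fin n) :=
  ⟨fun u v => u ≠ v ∧ v ≠ σ u, fun _ h => h.1 rfl⟩

lemma Dgr.ext_adj {D D' : Dgr V} (h : ∀ u v, D.Adj u v ↔ D'.Adj u v) : D = D' := by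
  cases D
  cases D'
  congr
  funext u v
  exact propext (h u v)

/-- Large degrees make the non-arcs a partial injection, which extends to a permutation. -/
lemma exists_perm_of_adj_or_adj {n : ℕ} {D : Dgr (Fin n)}
    (h : ∀ r a b : Fin n, r ≠ a → r ≠ b → a ≠ b →
      (D.Adj r a ∨ D.Adj r b) ∧ (D.Adj a r ∨ D.Adj b r)) :
    ∃ σ : Equiv.Perm (Fin n), ∀ u v, (compl σ).Adj u v → D.Adj u v := by
  classical
  let p : Fin n → Prop := fun u => ∃ v, u ≠ v ∧ ¬ D.Adj u v
  let q : Fin n → Prop := fun v => ∃ u, u ≠ v ∧ ¬ D.Adj u v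
  choose g hg using fun u : {u // p u} => u.2
  let e : {u // p u} → {v // q v} := fun u => ⟨g u, u, hg u⟩
  have he : Function.Bijective e := by
    constructor
    · intro u u' huu
      have hgg : g u = g u' := congrArg Subtype.val huu
      by_contra hne
      have h1 := hg u
      have h2 := hg u'
      rw [← hgg] at h2
      have := (h (g u) u u' h1.1.symm h2.1.symm (fun hc => hne (Subtype.ext hc))).2
      tauto
    · rintro ⟨v, u, huv, hno⟩
      refine ⟨⟨u, v, huv, hno⟩, Subtype.ext ?_⟩
      have h1 := hg ⟨u, v, huv, hno⟩
      by_contra hne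
      have := (h u _ v h1.1 huv hne).1
      tauto
  refine ⟨(Equiv.ofBijective e he).extendSubtype, fun u v huv => ?_⟩
  by_contra hno
  have hp : p u := ⟨v, huv.1, hno⟩
  have h2 := huv.2
  rw [Equiv.extendSubtype_apply_of_mem _ u hp] at h2
  have h1 := hg ⟨u, hp⟩
  have := (h u _ v h1.1 huv.1 (Ne.symm h2)).1
  tauto

/-! ### Explicit out-branchings of `K - σ` -/

/-- The parent of `w` in the out-branching indexed by `v`. That tree consists of `r → v` followed
by all arcs from `v`, except that `σ v`, which is not an out-neighbour of `v`, is reached from an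
auxiliary vertex `t`, or from `r` if it is `t` itself. -/
def par {n : ℕ} (σ : Equiv.Perm (Fin n)) (r t v w : Fin n) : Fin n :=
  if w = v then r else if w ≠ σ v then v else if w ≠ t then t else r

/-- The arc set of the out-branching rooted at `r` with parent function `par σ r t v`. -/
def tree {n : ℕ} (σ : Equiv.Perm (Fin n)) (r t v : Fin n) : Set (Fin n × Fin n) :=
  {p | p.2 ≠ r ∧ p.1 = par σ r t v p.2}

/-- The hypothesis `ht` says that `t` is the out-non-neighbour of `r`, if there is one. -/
lemma isSRTree_tree {n : ℕ} {σ : Equiv.Perm (Fin n)} {r t v : Fin n} (htr : t ≠ r)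
    (ht : σ r = r ∨ σ r = t) (hvr : v ≠ r) (hvt : v ≠ t) (S : Set (Fin n)) :
    IsSRTree (compl σ) S r (tree σ r t v) := by
  have hinj : ∀ x y, σ x = σ y → x = y := fun x y h => σ.injective h
  have hmem : ∀ w, w ≠ r → (par σ r t v w, w) ∈ tree σ r t v := fun w hw => ⟨hw, rfl⟩
  have hv : Relation.ReflTransGen (fun a b => (a, b) ∈ tree σ r t v) r v := by
    refine Relation.ReflTransGen.single ?_
    simpa [par] using hmem v hvr
  have hreach : ∀ w, w ≠ r → (w ≠ σ v ∨ w = t) →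
      Relation.ReflTransGen (fun a b => (a, b) ∈ tree σ r t v) r w := by
    intro w hw hw'
    have h := hmem w hw
    unfold par at h
    split_ifs at h with h1 h2 h3
    · exact .single h
    · exact hv.tail h
    · exact absurd hw' (by tauto)
    · exact .single h
  refine ⟨?_, ⟨?_, fun p hp => hp.1, ?_⟩, ?_⟩
  · rintro ⟨x, w⟩ ⟨hw, hx⟩
    simp only at hw hx
    subst hx
    change par σ r t v w ≠ w ∧ w ≠ σ (par σ r t v w)
    unfold par
    grind
  · intro w _
    by_cases hw : w = r
    · rw [hw]
    by_cases hw' : w ≠ σ v ∨ w = t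
    · exact hreach w hw hw'
    · have h := hmem w hw
      unfold par at h
      split_ifs at h with h1 h2 h3
      · exact .single h
      · exact hv.tail h
      · exact (hreach t htr (.inr rfl)).tail h
      · exact .single h
  · exact fun w _ hw => ⟨_, hmem w hw, fun y hy => hy.2⟩
  · intro w _
    by_cases hw : w = r
    · exact .inr hw
    · exact .inl ⟨_, .inl (hmem w hw)⟩

lemma arcDisj_tree {n : ℕ} {σ : Equiv.Perm (Fin n)} {r t v v' : Fin n} (htr : t ≠ r)
    (hvr : v ≠ r) (hvt : v ≠ t) (hvr' : v' ≠ r) (hvt' : v' ≠ t) (hne : v ≠ v') :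
    ArcDisj (tree σ r t v) (tree σ r t v') := by
  have hinj : σ v ≠ σ v' := fun h => hne (σ.injective h)
  refine Set.eq_empty_of_forall_notMem ?_
  rintro ⟨x, w⟩ ⟨⟨hw, hx⟩, -, hx'⟩
  simp only [par] at hw hx hx'
  grind

/-- Any digraph containing some `K - σ` has `λ_k ≥ n - 2`. -/
lemma le_lambdaK_of_compl_le {n k : ℕ} (hn : 3 ≤ n) (hk : 2 ≤ k) (hkn : k ≤ n)
    {D : Dgr (Fin n)} (σ : Equiv.Perm (Fin n)) (h : ∀ u v, (compl σ).Adj u v → D.Adj u v) :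
    n - 2 ≤ lambdaK D k := by
  refine le_csInf ?_ ?_
  · obtain ⟨S, hr, -, hS⟩ := exists_set_ncard hk hkn
      (x := (⟨0, by omega⟩ : Fin n)) (y := ⟨1, by omega⟩) (by simp)
    exact ⟨_, S, _, hr, hS, rfl⟩
  · rintro m ⟨S, r, hr, hS, rfl⟩
    obtain ⟨s, hs, hsr⟩ := Set.exists_ne_of_one_lt_ncard (s := S) (by omega) r
    obtain ⟨t, htr, ht⟩ : ∃ t, t ≠ r ∧ (σ r = r ∨ σ r = t) := by
      by_cases h0 : σ r = r
      · exact ⟨s, hsr, .inl h0⟩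
      · exact ⟨σ r, h0, .inr rfl⟩
    have hc : (({r, t} : Finset (Fin n))ᶜ).card = n - 2 := by
      rw [Finset.card_compl, Finset.card_pair htr.symm, Fintype.card_fin]
    let e := Finset.orderEmbOfFin _ hc
    have he : ∀ i, e i ≠ r ∧ e i ≠ t := by
      intro i
      have := Finset.orderEmbOfFin_mem _ hc i
      rwa [Finset.mem_compl, Finset.mem_insert, Finset.mem_singleton, not_or] at this
    refine le_lambdaSr hs hsr (f := fun i => tree σ r t (e i)) (fun i => ?_) fun i j hij => ?_
    · obtain ⟨h1, h2⟩ := isSRTree_tree htr ht (he i).1 (he i).2 S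
      exact ⟨h1.trans fun p hp => h _ _ hp, h2⟩
    · exact arcDisj_tree htr (he i).1 (he i).2 (he j).1 (he j).2 fun hc => hij (e.injective hc)

/-! ### The minimal digraphs -/

/-- The minimal digraphs are the `K - σ` for which `σ` has at most one fixed point. -/
lemma minASC_iff {n k : ℕ} (hn : 3 ≤ n) (hk : 2 ≤ k) (hkn : k ≤ n) (D : Dgr (Fin n)) :
    MinASC D k (n - 2) ↔
      ∃ σ : Equiv.Perm (Fin n), (∀ a b, σ a = a → σ b = b → a = b) ∧ D = compl σ := by
  constructor
  · rintro ⟨h1, h2⟩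
    obtain ⟨σ, hσ⟩ := exists_perm_of_adj_or_adj fun r a b hra hrb hab =>
      adj_or_adj_of_le_lambdaK hn hk hkn h1 hra hrb hab
    -- An arc of `D` outside some `K - τ ⊆ D` could be deleted.
    have key : ∀ τ : Equiv.Perm (Fin n), (∀ u v, (compl τ).Adj u v → D.Adj u v) →
        ∀ u v, D.Adj u v → (compl τ).Adj u v := by
      intro τ hτ u v huv
      by_contra hno
      have h3 := h2 (u, v) huv
      have h4 : n - 2 ≤ lambdaK (D.deleteArc (u, v)) k := by
        refine le_lambdaK_of_compl_le hn hk hkn τ fun x y hxy => ⟨hτ x y hxy, fun he => ?_⟩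
        obtain ⟨rfl, rfl⟩ := Prod.ext_iff.1 he
        exact hno hxy
      omega
    have hD : D = compl σ := Dgr.ext_adj fun u v => ⟨key σ hσ u v, hσ u v⟩
    refine ⟨σ, fun a b ha hb => ?_, hD⟩
    by_contra hab
    have hτ : ∀ x, (σ * Equiv.swap a b) x = if x = a then b else if x = b then a else σ x := by
      intro x
      rw [Equiv.Perm.mul_apply, Equiv.swap_apply_def]
      split_ifs <;> simp [ha, hb]
    have h3 := key (σ * Equiv.swap a b) (fun u v huv => hσ u v ⟨huv.1, ?_⟩) a b
      (hσ a b ⟨hab, by rw [ha]; exact Ne.symm hab⟩)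
    · exact h3.2 (by simp [hτ])
    · have h4 := huv.1
      have h5 := huv.2
      rw [hτ] at h5
      grind
  · rintro ⟨σ, hfix, rfl⟩
    refine ⟨le_lambdaK_of_compl_le hn hk hkn σ fun _ _ h => h, ?_⟩
    rintro ⟨u, v⟩ ⟨huv, hvu⟩
    simp only at huv hvu
    by_contra! hlt
    have hle : n - 2 ≤ lambdaK ((compl σ).deleteArc (u, v)) k := by omega
    -- The deleted arc leaves `u` or `v` with two non-neighbours on the same side.
    by_cases hu : σ u = u
    · have hv : σ v ≠ v := fun h => huv (hfix u v hu h)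
      have hv' : σ.symm v ≠ v := fun h => hv (by rw [← h]; simpa using h.symm)
      have hvu' : u ≠ σ.symm v := fun h => hvu (by rw [h]; simp)
      have := (adj_or_adj_of_le_lambdaK hn hk hkn hle huv.symm hv'.symm hvu').2
      rcases this with h | h
      · exact h.2 rfl
      · exact h.1.2 (by simp)
    · have := (adj_or_adj_of_le_lambdaK hn hk hkn hle huv (Ne.symm hu) hvu).1
      rcases this with h | h
      · exact h.2 rfl
      · exact h.1.2 rfl

/-! ### The families `D_{n,1}` and `D_{n,2}` -/

/-- Deleting a cycle factor on `W` is the same as passing to `K - σ` for a permutation `σ` whose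
non-fixed points are exactly the vertices of `W`. -/
lemma exists_cycleFactorOn_iff {n : ℕ} (W : Set (Fin n)) (D : Dgr (Fin n)) :
    (∃ M, CycleFactorOn M W ∧ D = (completeD n).deleteArcs M) ↔
      ∃ σ : Equiv.Perm (Fin n), (∀ u, σ u ≠ u ↔ u ∈ W) ∧ D = compl σ := by
  classical
  constructor
  · rintro ⟨M, ⟨h1, h2, h3⟩, rfl⟩
    choose g hg hg' using h2
    let f : Fin n → Fin n := fun u => if h : u ∈ W then g u h else u
    have hf : ∀ u (h : u ∈ W), f u = g u h := fun u h => by simp [f, h]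
    have hf' : ∀ u, u ∉ W → f u = u := fun u h => by simp [f, h]
    have hfM : ∀ u, u ∈ W → (u, f u) ∈ M := fun u h => hf u h ▸ hg u h
    have hinj : Function.Injective f := by
      intro u u' he
      by_cases hu : u ∈ W <;> by_cases hu' : u' ∈ W
      · have m1 := hfM u hu
        have m2 := hfM u' hu'
        rw [← he] at m2
        exact (h3 _ (h1 _ m1).2.1).unique m1 m2
      · have m1 := (h1 _ (hfM u hu)).2.1
        simp only at m1
        rw [he, hf' u' hu'] at m1
        exact absurd m1 hu'
      · have m1 := (h1 _ (hfM u' hu')).2.1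
        simp only at m1
        rw [← he, hf' u hu] at m1
        exact absurd m1 hu
      · rwa [hf' u hu, hf' u' hu'] at he
    refine ⟨Equiv.ofBijective f (Finite.injective_iff_bijective.1 hinj), fun u => ?_,
      Dgr.ext_adj fun u v => ?_⟩
    · simp only [Equiv.ofBijective_apply]
      by_cases hu : u ∈ W
      · exact iff_of_true (h1 _ (hfM u hu)).2.2.symm hu
      · exact iff_of_false (not_not.2 (hf' u hu)) hu
    · change (u ≠ v ∧ (u, v) ∉ M) ↔ (u ≠ v ∧ v ≠ f u)
      refine and_congr_right fun huv => not_congr ⟨fun hM => ?_, ?_⟩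
      · have hu := (h1 _ hM).1
        rw [hf u hu]
        exact hg' u hu v hM
      · rintro rfl
        by_cases hu : u ∈ W
        · exact hfM u hu
        · exact absurd (hf' u hu).symm huv
  · rintro ⟨σ, hσ, rfl⟩
    refine ⟨{p | p.1 ∈ W ∧ p.2 = σ p.1}, ⟨?_, ?_, ?_⟩, Dgr.ext_adj fun u v => ?_⟩
    · rintro ⟨u, v⟩ ⟨hu, hv⟩
      simp only at hu hv
      subst hv
      have hne := (hσ u).2 hu
      exact ⟨hu, (hσ _).1 fun h => hne (σ.injective h), hne.symm⟩
    · exact fun u hu => ⟨σ u, ⟨hu, rfl⟩, fun y hy => hy.2⟩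
    · intro v hv
      refine ⟨σ.symm v, ⟨(hσ _).1 fun h => (hσ v).2 hv ?_, by simp⟩, ?_⟩
      · rw [Equiv.apply_symm_apply] at h
        exact (Equiv.eq_symm_apply σ).1 h
      · rintro y ⟨-, hy⟩
        exact (Equiv.eq_symm_apply σ).2 hy.symm
    · change (u ≠ v ∧ v ≠ σ u) ↔ (u ≠ v ∧ ¬ (u ∈ W ∧ v = σ u))
      refine and_congr_right fun huv => not_congr ⟨fun h => ⟨(hσ u).1 ?_, h⟩, fun h => h.2⟩
      rw [← h]
      exact huv.symm

lemma mem_D1_iff {n : ℕ} (D : Dgr (Fin n)) :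
    D ∈ D1 n ↔ ∃ σ : Equiv.Perm (Fin n), (∀ u, σ u ≠ u) ∧ D = compl σ := by
  refine (exists_cycleFactorOn_iff Set.univ D).trans ?_
  simp

lemma mem_D2_iff {n : ℕ} (D : Dgr (Fin n)) :
    D ∈ D2 n ↔ ∃ (w : Fin n) (σ : Equiv.Perm (Fin n)), (∀ u, σ u = u ↔ u = w) ∧ D = compl σ := by
  have h : D ∈ D2 n ↔ ∃ w : Fin n, ∃ M, CycleFactorOn M {w}ᶜ ∧ D = (completeD n).deleteArcs M :=
    exists_comm
  rw [h]
  refine exists_congr fun w => (exists_cycleFactorOn_iff _ D).trans ?_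
  simp only [Set.mem_compl_iff, Set.mem_singleton_iff, ne_eq, not_iff_not]

lemma ncard_arcs_compl {n : ℕ} (σ : Equiv.Perm (Fin n)) :
    (compl σ).Arcs.ncard = ∑ u, if σ u = u then n - 1 else n - 2 := by
  classical
  have h : (compl σ).Arcs =
      ((Finset.univ.filter fun p : Fin n × Fin n => p.1 ≠ p.2 ∧ p.2 ≠ σ p.1 : Finset _) :
        Set (Fin n × Fin n)) := by
    ext p
    simp [Dgr.Arcs, compl]
  rw [h, Set.ncard_coe_finset, Finset.card_filter, Fintype.sum_prod_type]
  refine Finset.sum_congr rfl fun u _ => ?_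
  rw [← Finset.card_filter]
  have h2 : (Finset.univ.filter fun v => u ≠ v ∧ v ≠ σ u) = ({u, σ u} : Finset (Fin n))ᶜ := by
    ext v
    simp [eq_comm]
  simp only [h2, Finset.card_compl, Fintype.card_fin]
  split_ifs with hu
  · simp [hu]
  · rw [Finset.card_pair (Ne.symm hu)]

lemma ncard_arcs_of_mem_D1 {n : ℕ} {D : Dgr (Fin n)} (h : D ∈ D1 n) :
    D.Arcs.ncard = n * (n - 2) := by
  obtain ⟨σ, hσ, rfl⟩ := (mem_D1_iff D).1 h
  simp [ncard_arcs_compl, hσ]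

lemma ncard_arcs_of_mem_D2 {n : ℕ} (hn : 3 ≤ n) {D : Dgr (Fin n)} (h : D ∈ D2 n) :
    D.Arcs.ncard = (n - 1) ^ 2 := by
  obtain ⟨w, σ, hσ, rfl⟩ := (mem_D2_iff D).1 h
  rw [ncard_arcs_compl, ← Finset.add_sum_erase _ _ (Finset.mem_univ w), if_pos ((hσ w).2 rfl),
    Finset.sum_congr rfl (g := fun _ => n - 2) (fun u hu => by
      rw [if_neg (fun h => (Finset.ne_of_mem_erase hu) ((hσ u).1 h))])]
  obtain ⟨m, rfl⟩ : ∃ m, n = m + 2 := ⟨n - 2, by omega⟩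
  simp
  ring

lemma minASC_iff_mem {n k : ℕ} (hn : 3 ≤ n) (hk : 2 ≤ k) (hkn : k ≤ n) (D : Dgr (Fin n)) :
    MinASC D k (n - 2) ↔ D ∈ D1 n ∨ D ∈ D2 n := by
  rw [minASC_iff hn hk hkn, mem_D1_iff, mem_D2_iff]
  constructor
  · rintro ⟨σ, hσ, rfl⟩
    by_cases h : ∃ w, σ w = w
    · obtain ⟨w, hw⟩ := h
      exact .inr ⟨w, σ, fun u => ⟨fun hu => hσ u w hu hw, fun hu => hu ▸ hw⟩, rfl⟩
    · exact .inl ⟨σ, not_exists.1 h, rfl⟩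
  · rintro (⟨σ, hσ, rfl⟩ | ⟨w, σ, hσ, rfl⟩)
    · exact ⟨σ, fun a b ha => absurd ha (hσ a), rfl⟩
    · exact ⟨σ, fun a b ha hb => ((hσ a).1 ha).trans ((hσ b).1 hb).symm, rfl⟩

lemma exists_perm_card_support {n j : ℕ} (hj : 2 ≤ j) (hjn : j ≤ n) :
    ∃ σ : Equiv.Perm (Fin n), σ.support.card = j := by
  obtain ⟨σ, hσ⟩ := (Equiv.Perm.exists_with_cycleType_iff (α := Fin n) (m := {j})).2
    ⟨by simpa using hjn, by simpa using hj⟩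
  exact ⟨σ, by rw [← Equiv.Perm.sum_cycleType, hσ]; simp⟩

lemma D1_nonempty {n : ℕ} (hn : 3 ≤ n) : (D1 n).Nonempty := by
  obtain ⟨σ, hσ⟩ := exists_perm_card_support (show 2 ≤ n by omega) le_rfl
  have h : σ.support = Finset.univ := Finset.card_eq_iff_eq_univ _ |>.1 (by simpa using hσ)
  refine ⟨compl σ, (mem_D1_iff _).2 ⟨σ, fun u => ?_, rfl⟩⟩
  exact Equiv.Perm.mem_support.1 (h ▸ Finset.mem_univ u)

lemma D2_nonempty {n : ℕ} (hn : 3 ≤ n) : (D2 n).Nonempty := by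
  obtain ⟨σ, hσ⟩ := exists_perm_card_support (n := n) (show 2 ≤ n - 1 by omega) (by omega)
  have h : (σ.supportᶜ).card = 1 := by
    rw [Finset.card_compl, hσ, Fintype.card_fin]
    omega
  obtain ⟨w, hw⟩ := Finset.card_eq_one.1 h
  refine ⟨compl σ, (mem_D2_iff _).2 ⟨w, σ, fun u => ?_, rfl⟩⟩
  rw [← Finset.mem_singleton (a := w), ← hw, Finset.mem_compl, Equiv.Perm.mem_support, not_not]

/-! ### Extremal digraphs -/

/-- among minimally generalized `(k, n-2)`-arc-strongly
connected digraphs of order `n`, the minimum-size ones are exactly `D_{n,1}`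
(each of size `n(n-2)`) and the maximum-size ones are exactly `D_{n,2}`
(each of size `(n-1)²`). -/
theorem stmt_7 (n k : ℕ) (hn : 3 ≤ n) (hk : 2 ≤ k) (hkn : k ≤ n) :
    {D : Dgr (Fin n) | MinASC D k (n - 2) ∧
      ∀ D' : Dgr (Fin n), MinASC D' k (n - 2) →
        D.Arcs.ncard ≤ D'.Arcs.ncard} = D1 n ∧
    (∀ D ∈ D1 n, D.Arcs.ncard = n * (n - 2)) ∧
    {D : Dgr (Fin n) | MinASC D k (n - 2) ∧
      ∀ D' : Dgr (Fin n), MinASC D' k (n - 2) →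
        D'.Arcs.ncard ≤ D.Arcs.ncard} = D2 n ∧
    (∀ D ∈ D2 n, D.Arcs.ncard = (n - 1) ^ 2) := by
  have hc1 := fun D (hD : D ∈ D1 n) => ncard_arcs_of_mem_D1 hD
  have hc2 := fun D (hD : D ∈ D2 n) => ncard_arcs_of_mem_D2 hn hD
  have hlt : n * (n - 2) < (n - 1) ^ 2 := by
    obtain ⟨m, rfl⟩ : ∃ m, n = m + 2 := ⟨n - 2, by omega⟩
    simp only [Nat.add_sub_cancel, show m + 2 - 1 = m + 1 by omega]
    nlinarith
  obtain ⟨E1, hE1⟩ := D1_nonempty hn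
  obtain ⟨E2, hE2⟩ := D2_nonempty hn
  simp only [minASC_iff_mem hn hk hkn]
  refine ⟨?_, hc1, ?_, hc2⟩
  · ext D
    constructor
    · rintro ⟨hD | hD, hmin⟩
      · exact hD
      · have := hmin E1 (.inl hE1)
        rw [hc2 D hD, hc1 E1 hE1] at this
        omega
    · refine fun hD => ⟨.inl hD, ?_⟩
      rintro D' (hD' | hD')
      · rw [hc1 D hD, hc1 D' hD']
      · rw [hc1 D hD, hc2 D' hD']
        exact hlt.le
  · ext D
    constructor
    · rintro ⟨hD | hD, hmax⟩
      · have := hmax E2 (.inr hE2)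
        rw [hc1 D hD, hc2 E2 hE2] at this
        omega
      · exact hD
    · refine fun hD => ⟨.inr hD, ?_⟩
      rintro D' (hD' | hD')
      · rw [hc2 D hD, hc1 D' hD']
        exact hlt.le
      · rw [hc2 D hD, hc2 D' hD']

end TreeConn
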